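/- arXiv:1812.00247 — 2 statements merged into one kernel-verified Lean document; each statement's English description precedes it below -/
import Mathlib

section
/- Let L be an n-dimensional nilpotent Lie algebra of nilpotency class c ≥ 3 with dim L² = m ≥ 2. If dim M(L) = (1/2)(n−m−1)(n+m) − Σ_{i=2}^{min(n−m,c)} (n−m−i), then L is capable. -/
open Module

/-- The dimension of the Schur multiplier `M(L) = (R ∩ F²)/[R,F]` of a Lie algebra `L`,
computed from a free presentation `π : FreeLieAlgebra K X → L` (with `R = ker π` and
`F² = [F,F]`). -/
noncomputable def lieSchurMultiplierDim (K : Type) [Field K] (X : Type) {L : Type}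
    [LieRing L] [LieAlgebra K L] (π : FreeLieAlgebra K X →ₗ⁅K⁆ L) : ℕ :=
  let F := FreeLieAlgebra K X
  let R : LieIdeal K F := π.ker
  let F2 : LieIdeal K F := LieModule.lowerCentralSeries K F F 1
  Module.finrank K
    (↥((R ⊓ F2 : LieIdeal K F) : Submodule K F) ⧸
      (Submodule.comap ((R ⊓ F2 : LieIdeal K F) : Submodule K F).subtype
        ((⁅R, (⊤ : LieIdeal K F)⁆ : LieIdeal K F) : Submodule K F)))

/-- `L` is nilpotent of nilpotency class exactly `c`: in the paper's notation
`γ_{c+1}(L) = 0` and `γ_k(L) ≠ 0` for `k ≤ c` (Mathlib's `lowerCentralSeries` is indexed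
so that `γ_{k+1}(L) = lowerCentralSeries K L L k`). -/
def lieNilpotencyClass (K : Type) [Field K] (L : Type) [LieRing L] [LieAlgebra K L]
    (c : ℕ) : Prop :=
  LieModule.lowerCentralSeries K L L c = ⊥ ∧
    ∀ k < c, LieModule.lowerCentralSeries K L L k ≠ ⊥

/-- The dimension of the derived subalgebra `L² = [L,L]`. -/
noncomputable def lieDerivedDim (K : Type) [Field K] (L : Type) [LieRing L]
    [LieAlgebra K L] : ℕ :=
  Module.finrank K
    ↥((LieModule.lowerCentralSeries K L L 1 : LieSubmodule K L L) : Submodule K L)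

/-- Rai's upper bound `(1/2)(n−m−1)(n+m) − Σ_{i=2}^{min(n−m,c)} (n−m−i)`. -/
def raiBound (n m c : ℕ) : ℤ :=
  ((n : ℤ) - m - 1) * ((n : ℤ) + m) / 2
    - ∑ i ∈ Finset.Icc 2 (min (n - m) c), ((n : ℤ) - m - (i : ℤ))

/-- A Lie algebra `L` is capable if `L ≅ E/Z(E)` for some Lie algebra `E`. -/
def lieIsCapable (K : Type) [Field K] (L : Type) [LieRing L] [LieAlgebra K L] : Prop :=
  ∃ (E : Type) (_ : LieRing E) (_ : LieAlgebra K E),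
    Nonempty ((E ⧸ LieAlgebra.center K E) ≃ₗ⁅K⁆ L)



/-- The lower central series as plain submodules. -/
def gam (K E : Type) [Field K] [LieRing E] [LieAlgebra K E] (k : ℕ) : Submodule K E :=
  (LieModule.lowerCentralSeries K E E k).toSubmodule

section basics

variable {K E : Type} [Field K] [LieRing E] [LieAlgebra K E]

theorem gam_zero : gam K E 0 = ⊤ := by
  simp [gam]

theorem gam_anti {i j : ℕ} (h : i ≤ j) : gam K E j ≤ gam K E i :=
  LieModule.antitone_lowerCentralSeries K E E h

theorem gam_lie_left {k : ℕ} {g : E} (hg : g ∈ gam K E k) (e : E) : ⁅e, g⁆ ∈ gam K E (k + 1) := by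
  unfold gam
  rw [LieModule.lowerCentralSeries_succ]
  exact LieSubmodule.lie_mem_lie (LieSubmodule.mem_top e) hg

theorem gam_lie_right {k : ℕ} {g : E} (hg : g ∈ gam K E k) (e : E) :
    ⁅g, e⁆ ∈ gam K E (k + 1) := by
  rw [← lie_skew]
  exact neg_mem (gam_lie_left hg e)

theorem gam_succ_le {k : ℕ} {N : Submodule K E}
    (h : ∀ g ∈ gam K E k, ∀ e : E, ⁅g, e⁆ ∈ N) : gam K E (k + 1) ≤ N := by
  unfold gam
  rw [LieModule.lowerCentralSeries_succ, LieSubmodule.lieIdeal_oper_eq_linear_span',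
    Submodule.span_le]
  rintro _ ⟨x, _, n, hn, rfl⟩
  rw [← lie_skew]
  exact neg_mem (h n hn x)

theorem gam_lie_two {k : ℕ} {g v : E} (hg : g ∈ gam K E k) (hv : v ∈ gam K E 1) :
    ⁅g, v⁆ ∈ gam K E (k + 2) := by
  have h : gam K E (0 + 1) ≤ (gam K E (k + 2)).comap (LieAlgebra.ad K E g : E →ₗ[K] E) := by
    refine gam_succ_le fun a _ b => ?_
    have e : ⁅g, ⁅a, b⁆⁆ = ⁅⁅g, a⁆, b⁆ - ⁅⁅g, b⁆, a⁆ := by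
      rw [leibniz_lie g a b, ← lie_skew a ⁅g, b⁆]; abel
    change ⁅g, ⁅a, b⁆⁆ ∈ gam K E (k + 2)
    rw [e]
    exact sub_mem (gam_lie_right (gam_lie_right hg a) b) (gam_lie_right (gam_lie_right hg b) a)
  exact h hv

theorem gam_map {L' : Type} [LieRing L'] [LieAlgebra K L'] (p : E →ₗ⁅K⁆ L')
    (hp : Function.Surjective p) (k : ℕ) :
    (gam K E k).map (p : E →ₗ[K] L') = gam K L' k := by
  unfold gam
  rw [← LieIdeal.lowerCentralSeries_map_eq k hp, LieIdeal.coe_map_of_surjective hp]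

theorem gam_stable {k : ℕ} (h : gam K E k ≤ gam K E (k + 1)) (j : ℕ) :
    gam K E k ≤ gam K E (k + j) := by
  induction j with
  | zero => exact le_rfl
  | succ j ih =>
    refine h.trans (gam_succ_le fun g hg e => ?_)
    exact gam_lie_right (ih hg) e

theorem gam_lie_central {z : E} (hz : z ∈ LieAlgebra.center K E) (e : E) : ⁅z, e⁆ = 0 := by
  have := hz e
  rw [← lie_skew, this, neg_zero]

theorem gam_sub1 {k : ℕ} {A : Set E} {N : Submodule K E} (y : E)
    (hA : gam K E k ≤ Submodule.span K A ⊔ gam K E (k + 1) ⊔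
      (LieAlgebra.center K E).toSubmodule)
    (hN : gam K E (k + 2) ≤ N) (h : ∀ a ∈ A, ⁅a, y⁆ ∈ N) :
    ∀ g ∈ gam K E k, ⁅g, y⁆ ∈ N := by
  intro g hg
  have hle : Submodule.span K A ⊔ gam K E (k + 1) ⊔ (LieAlgebra.center K E).toSubmodule ≤
      N.comap (LieAlgebra.ad K E y : E →ₗ[K] E) := by
    refine sup_le (sup_le ?_ ?_) ?_
    · rw [Submodule.span_le]
      intro a ha
      have := neg_mem (h a ha)
      rwa [lie_skew] at this
    · intro u hu
      exact hN (gam_lie_left hu y)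
    · intro z hz
      have : ⁅y, z⁆ = 0 := hz y
      simp [this]
  have h2 : ⁅y, g⁆ ∈ N := hle (hA hg)
  rw [← lie_skew]
  exact neg_mem h2

theorem gam_sub2 {k : ℕ} {B : Set E} {N : Submodule K E} (g : E) (hg : g ∈ gam K E k)
    (hB : ⊤ ≤ Submodule.span K B ⊔ gam K E 1 ⊔ (LieAlgebra.center K E).toSubmodule)
    (hN : gam K E (k + 2) ≤ N) (h : ∀ b ∈ B, ⁅g, b⁆ ∈ N) (e : E) : ⁅g, e⁆ ∈ N := by
  have hle : Submodule.span K B ⊔ gam K E 1 ⊔ (LieAlgebra.center K E).toSubmodule ≤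
      N.comap (LieAlgebra.ad K E g : E →ₗ[K] E) := by
    refine sup_le (sup_le ?_ ?_) ?_
    · rw [Submodule.span_le]
      exact h
    · intro u hu
      exact hN (gam_lie_two hg hu)
    · intro z hz
      have : ⁅g, z⁆ = 0 := hz g
      simp [this]
  exact hle (hB (Submodule.mem_top (x := e)))

/-- Left-normed commutators in the family `x`, with set of used indices. -/
inductive LNorm {ι : Type} [DecidableEq ι] (x : ι → E) : ℕ → Finset ι → E → Prop
  | base (j : ι) : LNorm x 0 {j} (x j)
  | step {k : ℕ} {S : Finset ι} {w : E} (j : ι) (h : LNorm x k S w) :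
      LNorm x (k + 1) (insert j S) ⁅w, x j⁆

theorem LNorm.card_le {ι : Type} [DecidableEq ι] {x : ι → E} {k : ℕ} {S : Finset ι} {w : E}
    (h : LNorm x k S w) : S.card ≤ k + 1 := by
  induction h with
  | base j => simp
  | step j h ih => exact (Finset.card_insert_le _ _).trans (by omega)

theorem LNorm.mem {ι : Type} [DecidableEq ι] {x : ι → E} {k : ℕ} {S : Finset ι} {w : E}
    (h : LNorm x k S w) : w ∈ gam K E k := by
  induction h with
  | base j => rw [gam_zero]; trivial
  | step j h ih => exact gam_lie_right ih _

theorem LNorm.lie_mem {ι : Type} [DecidableEq ι] {x : ι → E} {k : ℕ} {S : Finset ι} {w : E}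
    (h : LNorm x k S w) : ∀ (l : ℕ) (v : E), v ∈ gam K E l → ∀ N : Submodule K E,
      (∀ g ∈ gam K E (l + k), ∀ j ∈ S, ⁅g, x j⁆ ∈ N) → ⁅v, w⁆ ∈ N := by
  induction h with
  | base j =>
    intro l v hv N hN
    exact hN v hv j (by simp)
  | @step k S w j h ih =>
    intro l v hv N hN
    have e : ⁅v, ⁅w, x j⁆⁆ = ⁅⁅v, w⁆, x j⁆ - ⁅⁅v, x j⁆, w⁆ := by
      rw [leibniz_lie v w (x j), ← lie_skew w ⁅v, x j⁆]; abel
    rw [e]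
    refine sub_mem ?_ ?_
    · refine hN _ ?_ j (by simp)
      refine ih l v hv _ fun g hg i _ => ?_
      exact gam_lie_right hg _
    · refine ih (l + 1) _ (gam_lie_right hv _) N fun g hg i hi => ?_
      refine hN g ?_ i (by simp [hi])
      have : l + (k + 1) = l + 1 + k := by omega
      rwa [this]

theorem LNorm.span_le {ι : Type} [DecidableEq ι] {x : ι → E}
    (hx : ⊤ ≤ Submodule.span K (Set.range x) ⊔ gam K E 1 ⊔
      (LieAlgebra.center K E).toSubmodule) (k : ℕ) :
    gam K E k ≤ Submodule.span K {w | ∃ S, LNorm x k S w} ⊔ gam K E (k + 1) ⊔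
      (LieAlgebra.center K E).toSubmodule := by
  induction k with
  | zero =>
    refine le_top.trans (hx.trans ?_)
    refine sup_le_sup_right (sup_le_sup_right (Submodule.span_mono ?_) _) _
    rintro _ ⟨j, rfl⟩
    exact ⟨_, LNorm.base j⟩
  | succ k ih =>
    refine le_trans ?_ le_sup_left
    refine gam_succ_le fun g hg e => ?_
    refine gam_sub2 g hg hx le_sup_right ?_ e
    rintro _ ⟨j, rfl⟩
    refine gam_sub1 (x j) ih le_sup_right ?_ g hg
    rintro w ⟨S, hw⟩
    exact Submodule.mem_sup_left (Submodule.subset_span ⟨_, LNorm.step j hw⟩)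

end basics

section bound

variable {K E L' : Type} [Field K] [LieRing E] [LieAlgebra K E] [LieRing L'] [LieAlgebra K L']

theorem LNorm.span_succ_le {ι : Type} [DecidableEq ι] {x : ι → E}
    (hx : ⊤ ≤ Submodule.span K (Set.range x) ⊔ gam K E 1 ⊔
      (LieAlgebra.center K E).toSubmodule) (k : ℕ) :
    gam K E (k + 1) ≤ Submodule.span K {w | ∃ S, LNorm x (k + 1) S w} ⊔ gam K E (k + 2) := by
  refine gam_succ_le fun g hg e => ?_
  refine gam_sub2 g hg hx le_sup_right ?_ e
  rintro _ ⟨j, rfl⟩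
  refine gam_sub1 (x j) (LNorm.span_le hx k) le_sup_right ?_ g hg
  rintro w ⟨S, hw⟩
  exact Submodule.mem_sup_left (Submodule.subset_span ⟨_, LNorm.step j hw⟩)

theorem exists_gens {V : Type} [AddCommGroup V] [Module K V] [FiniteDimensional K V]
    (M N : Submodule K V) (h : N ≤ M) :
    ∃ f : Fin (finrank K M - finrank K N) → V, (∀ a, f a ∈ M) ∧
      M ≤ Submodule.span K (Set.range f) ⊔ N := by
  obtain ⟨C, hC⟩ := Submodule.exists_isCompl N
  have h1 : N ⊔ (C ⊓ M) = M := by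
    rw [← sup_inf_assoc_of_le C h, hC.sup_eq_top, top_inf_eq]
  have h2 : N ⊓ (C ⊓ M) = ⊥ := by
    rw [← inf_assoc, hC.inf_eq_bot, bot_inf_eq]
  have h3 := Submodule.finrank_sup_add_finrank_inf_eq N (C ⊓ M)
  rw [h1, h2, finrank_bot] at h3
  have h4 : finrank K M - finrank K N = finrank K ↥(C ⊓ M) := by omega
  rw [h4]
  let b := Module.finBasis K ↥(C ⊓ M)
  refine ⟨fun a => (b a : V), fun a => (b a).2.2, ?_⟩
  have h5 : Submodule.span K (Set.range fun a => (b a : V)) = C ⊓ M := by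
    have : (Set.range fun a => (b a : V)) = (C ⊓ M).subtype '' (Set.range b) := by
      rw [← Set.range_comp]; rfl
    rw [this, Submodule.span_image, b.span_eq, Submodule.map_subtype_top]
  rw [h5, sup_comm, h1]

theorem le_of_map_le (p : E →ₗ⁅K⁆ L') (hker : ∀ e, p e = 0 → e ∈ LieAlgebra.center K E)
    {M U : Submodule K E} (h : M.map (p : E →ₗ[K] L') ≤ U.map (p : E →ₗ[K] L')) :
    M ≤ U ⊔ (LieAlgebra.center K E).toSubmodule := by
  intro g hg
  obtain ⟨u, hu, hug⟩ := h (Submodule.mem_map_of_mem hg)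
  have : p (g - u) = 0 := by
    rw [map_sub, sub_eq_zero]; exact hug.symm
  have e : g = u + (g - u) := by abel
  rw [e]
  exact Submodule.add_mem_sup hu (hker _ this)

theorem exists_gens_lift [FiniteDimensional K L'] (p : E →ₗ⁅K⁆ L')
    (hp : Function.Surjective p) (hker : ∀ e, p e = 0 → e ∈ LieAlgebra.center K E)
    (k : ℕ) (N : Submodule K E) (hN : N ≤ gam K E k) (r : ℕ)
    (hr : finrank K (gam K L' k) - finrank K (N.map (p : E →ₗ[K] L')) = r) :
    ∃ f : Fin r → E,
      gam K E k ≤ Submodule.span K (Set.range f) ⊔ N ⊔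
        (LieAlgebra.center K E).toSubmodule := by
  subst hr
  obtain ⟨f, hf, hs⟩ := exists_gens (gam K L' k) (N.map (p : E →ₗ[K] L')) (by
    rw [← gam_map p hp k]; exact Submodule.map_mono hN)
  choose g hg using fun a => hp (f a)
  refine ⟨g, le_of_map_le p hker ?_⟩
  rw [gam_map p hp, Submodule.map_sup, Submodule.map_span, ← Set.range_comp]
  have : ((p : E →ₗ[K] L') ∘ g) = f := funext hg
  rwa [this]

theorem bound_step [FiniteDimensional K L'] (p : E →ₗ⁅K⁆ L')
    (hp : Function.Surjective p) (hker : ∀ e, p e = 0 → e ∈ LieAlgebra.center K E)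
    {d : ℕ} {x : Fin d → E}
    (hx : ⊤ ≤ Submodule.span K (Set.range x) ⊔ gam K E 1 ⊔
      (LieAlgebra.center K E).toSubmodule) (k : ℕ) (hk : 1 ≤ k)
    (hne : ¬ gam K L' k ≤ gam K L' (k + 1)) :
    ∃ T : Finset E, T.card + (d - (k + 1)) + d * finrank K (gam K L' (k + 1)) ≤
        d * finrank K (gam K L' k) ∧
      gam K E (k + 1) ≤ Submodule.span K (T : Set E) ⊔ gam K E (k + 2) := by
  classical
  obtain ⟨S, w, hw, hpw⟩ : ∃ S w, LNorm x k S w ∧ p w ∉ gam K L' (k + 1) := by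
    by_contra! hcon
    apply hne
    obtain ⟨k, rfl⟩ : ∃ k', k = k' + 1 := ⟨k - 1, by omega⟩
    rw [← gam_map p hp (k + 1)]
    refine (Submodule.map_mono (LNorm.span_succ_le hx k)).trans ?_
    rw [Submodule.map_sup, gam_map p hp]
    refine sup_le ?_ le_rfl
    rw [Submodule.map_span, Submodule.span_le]
    rintro _ ⟨w, ⟨S, hw⟩, rfl⟩
    exact hcon S w hw
  have hwk : w ∈ gam K E k := hw.mem
  have hr : finrank K ((Submodule.span K {w} ⊔ gam K E (k + 1)).map (p : E →ₗ[K] L')) =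
      finrank K (gam K L' (k + 1)) + 1 := by
    rw [Submodule.map_sup, gam_map p hp, Submodule.map_span, Set.image_singleton]
    have h1 := Submodule.finrank_sup_add_finrank_inf_eq
      (Submodule.span K {(p : E →ₗ[K] L') w}) (gam K L' (k + 1))
    have h0 : (p : E →ₗ[K] L') w ≠ 0 := by
      intro h0
      apply hpw
      have : p w = 0 := h0
      rw [this]; exact zero_mem _
    have h2 : Submodule.span K {(p : E →ₗ[K] L') w} ⊓ gam K L' (k + 1) = ⊥ := by
      rw [← disjoint_iff, disjoint_comm, Submodule.disjoint_span_singleton' h0]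
      exact hpw
    rw [h2, finrank_bot, finrank_span_singleton h0] at h1
    omega
  have hle : finrank K ((Submodule.span K {w} ⊔ gam K E (k + 1)).map (p : E →ₗ[K] L')) ≤
      finrank K (gam K L' k) := by
    rw [← gam_map p hp k]
    apply Submodule.finrank_mono
    apply Submodule.map_mono
    exact (sup_le (by simpa [Submodule.span_le] using hwk) (gam_anti (Nat.le_succ k)))
  obtain ⟨r, hrr⟩ : ∃ r, finrank K (gam K L' k) = finrank K (gam K L' (k + 1)) + 1 + r :=
    ⟨_, (Nat.add_sub_cancel' (hr ▸ hle)).symm⟩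
  obtain ⟨f, hf⟩ := exists_gens_lift p hp hker k (Submodule.span K {w} ⊔ gam K E (k + 1))
    (sup_le (by simpa [Submodule.span_le] using hwk) (gam_anti (Nat.le_succ k))) r (by omega)
  rw [hrr]
  let T : Finset E := S.image (fun j => ⁅w, x j⁆) ∪
    Finset.univ.image (fun q : Fin r × Fin d => ⁅f q.1, x q.2⁆)
  refine ⟨T, ?_, ?_⟩
  · have c1 : T.card ≤ S.card + r * d := by
      refine (Finset.card_union_le _ _).trans (add_le_add Finset.card_image_le ?_)
      refine Finset.card_image_le.trans ?_
      simp
    have c2 := hw.card_le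
    have c3 : S.card ≤ d := by simpa using Finset.card_le_univ S
    have c4 : S.card + (d - (k + 1)) ≤ d := by omega
    nlinarith
  · have hA : gam K E k ≤ Submodule.span K (Set.range f ∪ {w}) ⊔ gam K E (k + 1) ⊔
        (LieAlgebra.center K E).toSubmodule := by
      rw [Submodule.span_union, sup_assoc (Submodule.span K (Set.range f))]
      exact hf
    have hTf : ∀ a j, ⁅f a, x j⁆ ∈ Submodule.span K (T : Set E) ⊔ gam K E (k + 2) := by
      intro a j
      refine Submodule.mem_sup_left (Submodule.subset_span ?_)
      refine Finset.mem_union_right _ (Finset.mem_image.2 ⟨(a, j), Finset.mem_univ _, rfl⟩)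
    have hTS : ∀ j ∈ S, ⁅w, x j⁆ ∈ Submodule.span K (T : Set E) ⊔ gam K E (k + 2) := by
      intro j hj
      refine Submodule.mem_sup_left (Submodule.subset_span ?_)
      exact Finset.mem_union_left _ (Finset.mem_image.2 ⟨j, hj, rfl⟩)
    have hgS : ∀ j ∈ S, ∀ g ∈ gam K E k,
        ⁅g, x j⁆ ∈ Submodule.span K (T : Set E) ⊔ gam K E (k + 2) := by
      intro j hj
      refine gam_sub1 (x j) hA le_sup_right ?_
      rintro a (⟨a, rfl⟩ | rfl)
      · exact hTf a j
      · exact hTS j hj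
    have hwy : ∀ y, ⁅w, y⁆ ∈ Submodule.span K (T : Set E) ⊔ gam K E (k + 2) := by
      intro y
      rw [← lie_skew]
      refine neg_mem (hw.lie_mem 0 y (by rw [gam_zero]; trivial) _ fun g hg j hj => ?_)
      rw [Nat.zero_add] at hg
      exact hgS j hj g hg
    refine gam_succ_le fun g hg e => ?_
    refine gam_sub2 g hg hx le_sup_right ?_ e
    rintro _ ⟨j, rfl⟩
    refine gam_sub1 (x j) hA le_sup_right ?_ g hg
    rintro a (⟨a, rfl⟩ | rfl)
    · exact hTf a j
    · exact hwy _

theorem bound_zero {d : ℕ} {x : Fin d → E}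
    (hx : ⊤ ≤ Submodule.span K (Set.range x) ⊔ gam K E 1 ⊔
      (LieAlgebra.center K E).toSubmodule) :
    ∃ T : Finset E, T.card ≤ ∑ i ∈ Finset.range d, i ∧
      gam K E 1 ≤ Submodule.span K (T : Set E) ⊔ gam K E 2 := by
  classical
  let T : Finset E := Finset.univ.image
    (fun q : (Σ j : Fin d, Fin j) => ⁅x ⟨q.2, q.2.2.trans q.1.2⟩, x q.1⁆)
  refine ⟨T, ?_, ?_⟩
  · refine Finset.card_image_le.trans ?_
    rw [Finset.card_univ, Fintype.card_sigma, Finset.sum_range]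
    simp
  · have hlt : ∀ i j : Fin d, i < j → ⁅x i, x j⁆ ∈ Submodule.span K (T : Set E) := by
      intro i j hij
      refine Submodule.subset_span (Finset.mem_image.2 ⟨⟨j, ⟨i, hij⟩⟩, Finset.mem_univ _, rfl⟩)
    have hall : ∀ i j : Fin d, ⁅x i, x j⁆ ∈ Submodule.span K (T : Set E) := by
      intro i j
      rcases lt_trichotomy i j with h | h | h
      · exact hlt i j h
      · subst h; rw [lie_self]; exact zero_mem _
      · rw [← lie_skew]; exact neg_mem (hlt j i h)
    have hx0 : gam K E 0 ≤ Submodule.span K (Set.range x) ⊔ gam K E (0 + 1) ⊔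
      (LieAlgebra.center K E).toSubmodule := le_top.trans hx
    refine gam_succ_le (k := 0) fun g hg e => ?_
    refine gam_sub2 g hg hx le_sup_right ?_ e
    rintro _ ⟨j, rfl⟩
    refine gam_sub1 (x j) hx0 le_sup_right ?_ g hg
    rintro _ ⟨i, rfl⟩
    exact Submodule.mem_sup_left (hall i j)

theorem gam_strict {c k : ℕ} (hc : gam K L' c = ⊥) (hk : k ≤ c) (hne : gam K L' k ≠ ⊥) :
    ¬ gam K L' k ≤ gam K L' (k + 1) := by
  intro h
  have := gam_stable h (c - k)
  rw [Nat.add_sub_cancel' hk, hc] at this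
  exact hne (le_bot_iff.1 this)

theorem bound_main [FiniteDimensional K L'] (p : E →ₗ⁅K⁆ L')
    (hp : Function.Surjective p) (hker : ∀ e, p e = 0 → e ∈ LieAlgebra.center K E)
    {c d : ℕ} (hd : finrank K L' - finrank K (gam K L' 1) = d)
    (hc1 : 1 ≤ c) (hc : gam K L' c = ⊥) (hcn : ∀ k < c, gam K L' k ≠ ⊥) :
    FiniteDimensional K (gam K E 1) ∧
      finrank K (gam K E 1) + ∑ i ∈ Finset.Icc 2 c, (d - i) ≤
        ∑ i ∈ Finset.range d, i + d * finrank K (gam K L' 1) := by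
  classical
  obtain ⟨x, hx⟩ := exists_gens_lift p hp hker 0 (gam K E 1) (gam_anti (Nat.zero_le 1)) d
    (by rw [gam_map p hp, gam_zero (E := L'), finrank_top, hd])
  rw [gam_zero] at hx
  have key : ∀ k, k + 1 ≤ c → ∃ T : Finset E,
      T.card + ∑ i ∈ Finset.Icc 2 (k + 1), (d - i) + d * finrank K (gam K L' (k + 1)) ≤
        ∑ i ∈ Finset.range d, i + d * finrank K (gam K L' 1) ∧
      gam K E 1 ≤ Submodule.span K (T : Set E) ⊔ gam K E (k + 2) := by
    intro k
    induction k with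
    | zero =>
      intro _
      obtain ⟨T, h1, h2⟩ := bound_zero hx
      exact ⟨T, by simpa using h1, h2⟩
    | succ k ih =>
      intro hk
      obtain ⟨T, h1, h2⟩ := ih (by omega)
      obtain ⟨T', h3, h4⟩ := bound_step p hp hker hx (k + 1) (by omega)
        (gam_strict hc (by omega) (hcn _ (by omega)))
      refine ⟨T ∪ T', ?_, ?_⟩
      · have := Finset.card_union_le T T'
        rw [Finset.sum_Icc_succ_top (by omega)]
        omega
      · rw [Finset.coe_union, Submodule.span_union, sup_assoc]
        exact h2.trans (sup_le_sup_left h4 _)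
  obtain ⟨k, rfl⟩ : ∃ k, c = k + 1 := ⟨c - 1, by omega⟩
  obtain ⟨T, h1, h2⟩ := key k le_rfl
  have hbot : gam K E (k + 2) = ⊥ := by
    refine le_bot_iff.1 (gam_succ_le fun g hg e => ?_)
    have : p g ∈ gam K L' (k + 1) := by
      rw [← gam_map p hp]; exact Submodule.mem_map_of_mem hg
    rw [hc, Submodule.mem_bot] at this
    rw [gam_lie_central (hker g this) e]
    exact zero_mem _
  rw [hbot, sup_bot_eq] at h2
  have hfin : FiniteDimensional K (Submodule.span K (T : Set E)) :=
    FiniteDimensional.span_finset K T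
  refine ⟨Submodule.finiteDimensional_of_le h2, ?_⟩
  have h3 := Submodule.finrank_mono h2
  have h4 := finrank_span_finset_le_card (R := K) T
  rw [Set.finrank] at h4
  omega

end bound

theorem rai_eq (n m c d : ℕ) (h : n = m + d) :
    raiBound n m c + m + ((∑ i ∈ Finset.Icc 2 c, (d - i) : ℕ) : ℤ) =
      ((∑ i ∈ Finset.range d, i : ℕ) : ℤ) + d * m := by
  subst h
  unfold raiBound
  have h1 : ∑ i ∈ Finset.Icc 2 (min (m + d - m) c), (((m + d : ℕ) : ℤ) - m - (i : ℤ)) =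
      ((∑ i ∈ Finset.Icc 2 c, (d - i) : ℕ) : ℤ) := by
    rw [Nat.cast_sum, Nat.add_sub_cancel_left]
    have hsub : Finset.Icc 2 (min d c) ⊆ Finset.Icc 2 c :=
      Finset.Icc_subset_Icc le_rfl (min_le_right _ _)
    rw [← Finset.sum_subset hsub (f := fun i => ((d - i : ℕ) : ℤ))]
    · refine Finset.sum_congr rfl fun i hi => ?_
      rw [Finset.mem_Icc] at hi
      have : i ≤ d := hi.2.trans (min_le_left _ _)
      push_cast [this]
      ring
    · intro i hi hi'
      rw [Finset.mem_Icc] at hi hi'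
      have : d - i = 0 := by omega
      simp [this]
  have h2 := Finset.sum_range_id_mul_two d
  have h3 : (((m + d : ℕ) : ℤ) - m - 1) * (((m + d : ℕ) : ℤ) + m) =
      (((∑ i ∈ Finset.range d, i : ℕ) : ℤ) + d * m - m) * 2 := by
    have h4 : ((∑ i ∈ Finset.range d, i : ℕ) : ℤ) * 2 = d * ((d : ℤ) - 1) := by
      rcases d with _ | d
      · simp
      · rw [Nat.add_sub_cancel] at h2
        have h5 : (((∑ i ∈ Finset.range (d + 1), i) * 2 : ℕ) : ℤ) = ((d + 1) * d : ℕ) := by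
          rw [h2]
        push_cast at h5 ⊢
        linarith
    push_cast at h4 ⊢
    linear_combination -h4
  rw [h1, h3, Int.mul_ediv_cancel _ (by norm_num)]
  ring

theorem sum_diff (c d : ℕ) :
    ∑ i ∈ Finset.Icc 2 c, (d + 1 - i) ≤ ∑ i ∈ Finset.Icc 2 c, (d - i) + d := by
  have h1 : ∀ i ∈ Finset.Icc 2 c, d + 1 - i ≤ (d - i) + (if i ∈ Finset.Icc 1 d then 1 else 0) := by
    intro i hi
    rw [Finset.mem_Icc] at hi
    split_ifs with h <;> rw [Finset.mem_Icc] at h <;> omega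
  refine (Finset.sum_le_sum h1).trans ?_
  rw [Finset.sum_add_distrib, Finset.sum_ite_mem, Finset.sum_const, smul_eq_mul, mul_one]
  refine add_le_add_right ?_ _
  exact (Finset.card_le_card Finset.inter_subset_right).trans (by simp)

theorem schur_le {K X L : Type} [Field K] [LieRing L] [LieAlgebra K L]
    [FiniteDimensional K L] (π : FreeLieAlgebra K X →ₗ⁅K⁆ L)
    {E : Type} [LieRing E] [LieAlgebra K E] (u : FreeLieAlgebra K X →ₗ⁅K⁆ E)
    (hu : ∀ x, u x = 0 ↔ x ∈ ⁅π.ker, (⊤ : LieIdeal K (FreeLieAlgebra K X))⁆)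
    (q : E →ₗ⁅K⁆ L) (hq : Function.Surjective q) (hqu : ∀ x, q (u x) = π x)
    (husurj : Function.Surjective u)
    [FiniteDimensional K (gam K E 1)] :
    lieSchurMultiplierDim K X π + finrank K (gam K L 1) ≤ finrank K (gam K E 1) := by
  let ql : gam K E 1 →ₗ[K] L := (q : E →ₗ[K] L).comp (gam K E 1).subtype
  have h1 := LinearMap.finrank_range_add_finrank_ker ql
  have h2 : LinearMap.range ql = gam K L 1 := by
    rw [LinearMap.range_comp, Submodule.range_subtype, gam_map q hq]
  rw [h2] at h1
  rw [← h1, add_comm]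
  refine Nat.add_le_add_left ?_ _
  unfold lieSchurMultiplierDim
  dsimp only
  set P : Submodule K (FreeLieAlgebra K X) :=
    ((π.ker ⊓ LieModule.lowerCentralSeries K (FreeLieAlgebra K X) (FreeLieAlgebra K X) 1 :
      LieIdeal K (FreeLieAlgebra K X)) : Submodule K (FreeLieAlgebra K X)) with hP
  let φ : P →ₗ[K] E := (u : FreeLieAlgebra K X →ₗ[K] E).comp P.subtype
  have hmem : ∀ x : P, φ x ∈ gam K E 1 := by
    intro x
    rw [← gam_map u husurj 1]
    exact Submodule.mem_map_of_mem x.2.2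
  let φ1 : P →ₗ[K] gam K E 1 := φ.codRestrict _ hmem
  have hmem2 : ∀ x : P, φ1 x ∈ LinearMap.ker ql := by
    intro x
    rw [LinearMap.mem_ker]
    change q (u x) = 0
    rw [hqu]
    exact x.2.1
  let φ2 : P →ₗ[K] LinearMap.ker ql := φ1.codRestrict _ hmem2
  have hker : LinearMap.ker φ2 = Submodule.comap P.subtype
      ((⁅π.ker, (⊤ : LieIdeal K (FreeLieAlgebra K X))⁆ : LieIdeal K (FreeLieAlgebra K X)) :
        Submodule K (FreeLieAlgebra K X)) := by
    ext x
    rw [LinearMap.mem_ker, Submodule.mem_comap]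
    have : φ2 x = 0 ↔ u x = 0 := by
      rw [← Subtype.coe_inj, ← Subtype.coe_inj]; rfl
    rw [this, hu]; rfl
  rw [← hker, LinearEquiv.finrank_eq φ2.quotKerEquivRange]
  exact Submodule.finrank_le _

/-- The one-dimensional ideal spanned by a central element. -/
def centralLine {K L : Type} [Field K] [LieRing L] [LieAlgebra K L] (z : L)
    (hz : ∀ x : L, ⁅x, z⁆ = 0) : LieIdeal K L :=
  { Submodule.span K {z} with
    lie_mem := by
      intro x y hy
      obtain ⟨t, rfl⟩ := Submodule.mem_span_singleton.1 hy
      rw [lie_smul, hz, smul_zero]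
      exact Submodule.zero_mem (Submodule.span K {z}) }

theorem core {K E L : Type} [Field K] [LieRing E] [LieAlgebra K E] [LieRing L] [LieAlgebra K L]
    [FiniteDimensional K L] (q : E →ₗ⁅K⁆ L) (hq : Function.Surjective q)
    (hker : ∀ e, q e = 0 → e ∈ LieAlgebra.center K E) {c d m : ℕ} (hc3 : 3 ≤ c) (hm2 : 2 ≤ m)
    (hm : finrank K (gam K L 1) = m) (hn : finrank K L = m + d)
    (hc : gam K L c = ⊥) (hcn : ∀ k < c, gam K L k ≠ ⊥)
    (hbig : ∑ i ∈ Finset.range d, i + d * m ≤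
      finrank K (gam K E 1) + ∑ i ∈ Finset.Icc 2 c, (d - i))
    (z : E) (hz : z ∈ LieAlgebra.center K E) : q z = 0 := by
  by_contra hne
  have hd0 : d ≠ 0 := by
    rintro rfl
    apply gam_strict hc (Nat.zero_le c) (hcn 0 (by omega))
    have : gam K L 1 = ⊤ := Submodule.eq_top_of_finrank_eq (by omega)
    rw [Nat.zero_add, this]; exact le_top
  have hzc : ∀ x : L, ⁅x, q z⁆ = 0 := by
    intro x
    obtain ⟨e, rfl⟩ := hq x
    rw [← LieHom.map_lie]
    have : ⁅e, z⁆ = 0 := hz e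
    rw [this, map_zero]
  let I : LieIdeal K L := centralLine (q z) hzc
  have hI : I.toSubmodule = Submodule.span K {q z} := rfl
  let r : L →ₗ⁅K⁆ (L ⧸ I) :=
    { (LieSubmodule.Quotient.mk' I : L →ₗ[K] L ⧸ I) with
      map_lie' := fun {x y} => LieSubmodule.Quotient.mk_bracket _ x y }
  have hr : Function.Surjective r := LieSubmodule.Quotient.surjective_mk' I
  have hr0 : ∀ x, r x = 0 ↔ x ∈ Submodule.span K {q z} :=
    fun x => LieSubmodule.Quotient.mk_eq_zero (N := I)
  have hrker : LinearMap.ker (r : L →ₗ[K] L ⧸ I) = Submodule.span K {q z} := by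
    ext x; exact hr0 x
  have : FiniteDimensional K (L ⧸ I) :=
    Module.Finite.of_surjective (r : L →ₗ[K] L ⧸ I) hr
  have hn' : finrank K (L ⧸ I) + 1 = m + d := by
    have := LinearMap.finrank_range_add_finrank_ker (r : L →ₗ[K] L ⧸ I)
    rw [hrker, finrank_span_singleton hne, LinearMap.range_eq_top.2 hr, finrank_top] at this
    omega
  have hm' : finrank K (gam K (L ⧸ I) 1) +
      finrank K (Submodule.span K {q z} ⊓ gam K L 1 : Submodule K L) = m := by
    have h := LinearMap.finrank_range_add_finrank_ker
      ((r : L →ₗ[K] L ⧸ I).comp (gam K L 1).subtype)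
    rw [LinearMap.range_comp, Submodule.range_subtype, gam_map r hr, LinearMap.ker_comp, hrker,
      ← Submodule.finrank_map_subtype_eq, Submodule.map_comap_subtype, hm, inf_comm] at h
    exact h
  have hex : ∃ k, gam K (L ⧸ I) k = ⊥ := ⟨c, by rw [← gam_map r hr, hc, Submodule.map_bot]⟩
  obtain ⟨c', hc', hcn'⟩ : ∃ c', gam K (L ⧸ I) c' = ⊥ ∧ ∀ k < c', gam K (L ⧸ I) k ≠ ⊥ := by
    classical
    exact ⟨Nat.find hex, Nat.find_spec hex, fun k hk => Nat.find_min hex hk⟩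
  have hlec : gam K L c' ≤ Submodule.span K {q z} := by
    intro x hx
    rw [← hr0]
    have : r x ∈ gam K (L ⧸ I) c' := by
      rw [← gam_map r hr]; exact Submodule.mem_map_of_mem hx
    rwa [hc', Submodule.mem_bot] at this
  have hcc : c ≤ c' + 1 := by
    by_contra! hlt
    apply hcn _ hlt
    refine le_bot_iff.1 (gam_succ_le fun g hg e => ?_)
    obtain ⟨t, rfl⟩ := Submodule.mem_span_singleton.1 (hlec hg)
    rw [smul_lie, ← lie_skew, hzc, neg_zero, smul_zero]
    exact zero_mem _
  have hp : Function.Surjective (r.comp q) := by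
    intro y
    obtain ⟨x, rfl⟩ := hr y
    obtain ⟨e, rfl⟩ := hq x
    exact ⟨e, rfl⟩
  have hpker : ∀ e, (r.comp q) e = 0 → e ∈ LieAlgebra.center K E := by
    intro e he
    have : q e ∈ Submodule.span K {q z} := (hr0 _).1 he
    obtain ⟨t, ht⟩ := Submodule.mem_span_singleton.1 this
    have h1 : q (e - t • z) = 0 := by
      rw [map_sub, map_smul, ht, sub_self]
    have h2 : e = (e - t • z) + t • z := by abel
    rw [h2]
    exact add_mem (hker _ h1) (SMulMemClass.smul_mem t hz)
  by_cases hzL : q z ∈ gam K L 1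
  · have hinf : Submodule.span K {q z} ⊓ gam K L 1 = Submodule.span K {q z} := by
      rw [inf_eq_left, Submodule.span_le]; simpa using hzL
    rw [hinf, finrank_span_singleton hne] at hm'
    have hb := (bound_main (r.comp q) hp hpker (d := d) (by omega) (by omega) hc' hcn').2
    have hs1 : ∑ i ∈ Finset.Icc 2 (c - 1), (d - i) ≤ ∑ i ∈ Finset.Icc 2 c', (d - i) :=
      Finset.sum_le_sum_of_subset (Finset.Icc_subset_Icc le_rfl (by omega))
    obtain ⟨b, rfl⟩ : ∃ b, c = b + 1 := ⟨c - 1, by omega⟩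
    rw [Finset.sum_Icc_succ_top (by omega)] at hbig
    rw [Nat.add_sub_cancel] at hs1
    rw [← hm', mul_add] at hbig
    omega
  · have hinf : Submodule.span K {q z} ⊓ gam K L 1 = ⊥ := by
      rw [← disjoint_iff, disjoint_comm, Submodule.disjoint_span_singleton' hne]
      exact hzL
    rw [hinf, finrank_bot] at hm'
    obtain ⟨d, rfl⟩ : ∃ d', d = d' + 1 := ⟨d - 1, by omega⟩
    have hcc' : c ≤ c' := by
      by_contra! hlt
      apply hcn _ hlt
      rw [← le_bot_iff, ← hinf]
      exact le_inf hlec (gam_anti (by omega))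
    have hb := (bound_main (r.comp q) hp hpker (d := d) (by omega) (by omega) hc' hcn').2
    have hs1 : ∑ i ∈ Finset.Icc 2 c, (d - i) ≤ ∑ i ∈ Finset.Icc 2 c', (d - i) :=
      Finset.sum_le_sum_of_subset (Finset.Icc_subset_Icc le_rfl hcc')
    have hs2 := sum_diff c d
    have hmm : finrank K (gam K (L ⧸ I) 1) = m := by omega
    rw [hmm] at hb
    rw [Finset.sum_range_succ, add_mul] at hbig
    omega

/-- an `n`-dimensional nilpotent Lie algebra of class `c ≥ 3` with
`dim L² = m ≥ 2` whose Schur multiplier attains Rai's bound is capable. -/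
theorem capable_of_attains_bound (K L : Type) [Field K] [LieRing L] [LieAlgebra K L]
    [FiniteDimensional K L] (n m c : ℕ) (hc3 : 3 ≤ c) (hm2 : 2 ≤ m)
    (hn : Module.finrank K L = n) (hm : lieDerivedDim K L = m)
    (hc : lieNilpotencyClass K L c)
    (hM : ∃ (X : Type) (π : FreeLieAlgebra K X →ₗ⁅K⁆ L), Function.Surjective π ∧
      (lieSchurMultiplierDim K X π : ℤ) = raiBound n m c) :
    lieIsCapable K L := by
  obtain ⟨X, π, hπ, hS⟩ := hM
  obtain ⟨hc0, hcn⟩ := hc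
  have hc0' : gam K L c = ⊥ := by unfold gam; rw [hc0]; rfl
  have hcn' : ∀ k < c, gam K L k ≠ ⊥ := by
    intro k hk h
    apply hcn k hk
    exact (LieSubmodule.toSubmodule_eq_bot _).1 h
  have hm' : finrank K (gam K L 1) = m := hm
  have hmn : m ≤ n := by rw [← hm', ← hn]; exact Submodule.finrank_le _
  obtain ⟨d, rfl⟩ := Nat.exists_eq_add_of_le hmn
  let J : LieIdeal K (FreeLieAlgebra K X) := ⁅π.ker, (⊤ : LieIdeal K (FreeLieAlgebra K X))⁆
  have hJ : J ≤ π.ker := LieSubmodule.lie_le_left _ _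
  let u : FreeLieAlgebra K X →ₗ⁅K⁆ (FreeLieAlgebra K X ⧸ J) :=
    { (LieSubmodule.Quotient.mk' J : FreeLieAlgebra K X →ₗ[K] FreeLieAlgebra K X ⧸ J) with
      map_lie' := fun {x y} => LieSubmodule.Quotient.mk_bracket _ x y }
  have hu : Function.Surjective u := LieSubmodule.Quotient.surjective_mk' J
  have hu0 : ∀ x, u x = 0 ↔ x ∈ J := fun x => LieSubmodule.Quotient.mk_eq_zero (N := J)
  let ql : (FreeLieAlgebra K X ⧸ J) →ₗ[K] L :=
    J.toSubmodule.liftQ (π : FreeLieAlgebra K X →ₗ[K] L) (fun x hx => hJ hx)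
  have hqlu : ∀ x, ql (u x) = π x := fun x => rfl
  let q : (FreeLieAlgebra K X ⧸ J) →ₗ⁅K⁆ L :=
    { ql with
      map_lie' := by
        intro x y
        obtain ⟨x, rfl⟩ := hu x
        obtain ⟨y, rfl⟩ := hu y
        change ql ⁅u x, u y⁆ = ⁅ql (u x), ql (u y)⁆
        rw [← LieHom.map_lie, hqlu, hqlu, hqlu, LieHom.map_lie] }
  have hqu : ∀ x, q (u x) = π x := hqlu
  have hq : Function.Surjective q := fun y => by
    obtain ⟨x, rfl⟩ := hπ y
    exact ⟨u x, hqu x⟩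
  have hker : ∀ e, q e = 0 → e ∈ LieAlgebra.center K (FreeLieAlgebra K X ⧸ J) := by
    intro e he y
    obtain ⟨e, rfl⟩ := hu e
    obtain ⟨y, rfl⟩ := hu y
    rw [← LieHom.map_lie, hu0, ← lie_skew]
    rw [hqu] at he
    exact neg_mem (LieSubmodule.lie_mem_lie he (LieSubmodule.mem_top y))
  have : FiniteDimensional K (gam K (FreeLieAlgebra K X ⧸ J) 1) :=
    (bound_main q hq hker rfl (by omega) hc0' hcn').1
  have h1 := schur_le π u hu0 q hq hqu hu
  have h2 := rai_eq (m + d) m c d rfl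
  rw [← hS] at h2
  rw [hm'] at h1
  have h3 : lieSchurMultiplierDim K X π + m + ∑ i ∈ Finset.Icc 2 c, (d - i) =
      ∑ i ∈ Finset.range d, i + d * m := by exact_mod_cast h2
  have hcore := core q hq hker hc3 hm2 hm' hn hc0' hcn' (by omega)
  have hcen : LieAlgebra.center K (FreeLieAlgebra K X ⧸ J) = q.ker := by
    ext e
    exact ⟨fun h => hcore e h, fun h => hker e h⟩
  refine ⟨FreeLieAlgebra K X ⧸ J, inferInstance, inferInstance, ?_⟩
  rw [hcen]
  have hrange : q.range = ⊤ := (LieHom.range_eq_top q).2 hq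
  exact ⟨q.quotKerEquivRange.trans ((LieEquiv.ofEq _ _ (by rw [hrange])).trans LieSubalgebra.topEquiv)⟩
end

section
/- The 5-dimensional filiform Lie algebra L_{5,7} = ⟨x₁,…,x₅ : [x₁,x₂]=x₃, [x₁,x₃]=x₄, [x₁,x₄]=x₅⟩ has Schur multiplier of dimension 3; with n = 5, m = 3, c = 4, this equals (1/2)(n−m−1)(n+m) − Σ_{i=2}^{min(n−m,c)} (n−m−i) − 1. -/
open Module

/-- The filiform Lie algebra `L_{5,7} = ⟨x₁,…,x₅ : [x₁,x₂]=x₃, [x₁,x₃]=x₄, [x₁,x₄]=x₅⟩`,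
all other brackets of generators trivial. -/
noncomputable def lieL57 (K : Type) [Field K] : Type :=
  let F := FreeLieAlgebra K (Fin 5)
  let x : Fin 5 → F := FreeLieAlgebra.of K
  F ⧸ LieSubmodule.lieSpan K F
    {⁅x 0, x 1⁆ - x 2, ⁅x 0, x 2⁆ - x 3, ⁅x 0, x 3⁆ - x 4, ⁅x 0, x 4⁆,
     ⁅x 1, x 2⁆, ⁅x 1, x 3⁆, ⁅x 1, x 4⁆, ⁅x 2, x 3⁆, ⁅x 2, x 4⁆, ⁅x 3, x 4⁆}

noncomputable instance (K : Type) [Field K] : LieRing (lieL57 K) := by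
  unfold lieL57; infer_instance
noncomputable instance (K : Type) [Field K] : LieAlgebra K (lieL57 K) := by
  unfold lieL57; infer_instance

set_option linter.unusedSectionVars false
/-- Explicit model of the filiform Lie algebra on `K^5`. -/
def FilL (K : Type) : Type := Fin 5 → K

/-- Explicit model of its cover on `K^8`. -/
def FilC (K : Type) : Type := Fin 8 → K

section Models
variable {K : Type} [Field K]

instance : AddCommGroup (FilL K) := inferInstanceAs (AddCommGroup (Fin 5 → K))
instance : Module K (FilL K) := inferInstanceAs (Module K (Fin 5 → K))
instance : AddCommGroup (FilC K) := inferInstanceAs (AddCommGroup (Fin 8 → K))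
instance : Module K (FilC K) := inferInstanceAs (Module K (Fin 8 → K))

theorem FilL.ext {a b : FilL K} (h0 : a 0 = b 0) (h1 : a 1 = b 1) (h2 : a 2 = b 2)
    (h3 : a 3 = b 3) (h4 : a 4 = b 4) : a = b := by
  funext i; fin_cases i <;> assumption
theorem FilC.ext {a b : FilC K} (h0 : a 0 = b 0) (h1 : a 1 = b 1) (h2 : a 2 = b 2)
    (h3 : a 3 = b 3) (h4 : a 4 = b 4) (h5 : a 5 = b 5) (h6 : a 6 = b 6) (h7 : a 7 = b 7) :
    a = b := by
  funext i; fin_cases i <;> assumption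

@[simp] theorem FilL.add_apply (a b : FilL K) (i : Fin 5) : (a + b) i = a i + b i := rfl
@[simp] theorem FilL.zero_apply (i : Fin 5) : (0 : FilL K) i = 0 := rfl
@[simp] theorem FilL.smul_apply (t : K) (b : FilL K) (i : Fin 5) : (t • b) i = t * b i := rfl
@[simp] theorem FilL.sub_apply (a b : FilL K) (i : Fin 5) : (a - b) i = a i - b i := rfl
@[simp] theorem FilC.add_apply (a b : FilC K) (i : Fin 8) : (a + b) i = a i + b i := rfl
@[simp] theorem FilC.zero_apply (i : Fin 8) : (0 : FilC K) i = 0 := rfl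
@[simp] theorem FilC.smul_apply (t : K) (b : FilC K) (i : Fin 8) : (t • b) i = t * b i := rfl

instance : Bracket (FilL K) (FilL K) :=
  ⟨fun a b => (![0, 0, a 0 * b 1 - a 1 * b 0, a 0 * b 2 - a 2 * b 0, a 0 * b 3 - a 3 * b 0] :
    Fin 5 → K)⟩

instance : Bracket (FilC K) (FilC K) :=
  ⟨fun a b => (![0, 0, a 0 * b 1 - a 1 * b 0, a 0 * b 2 - a 2 * b 0, a 0 * b 3 - a 3 * b 0,
    a 0 * b 4 - a 4 * b 0, a 1 * b 2 - a 2 * b 1,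
    a 1 * b 4 - a 4 * b 1 - (a 2 * b 3 - a 3 * b 2)] : Fin 8 → K)⟩

@[simp] theorem FilL.lie_0 (a b : FilL K) : ⁅a, b⁆ 0 = 0 := rfl
@[simp] theorem FilL.lie_1 (a b : FilL K) : ⁅a, b⁆ 1 = 0 := rfl
@[simp] theorem FilL.lie_2 (a b : FilL K) : ⁅a, b⁆ 2 = a 0 * b 1 - a 1 * b 0 := rfl
@[simp] theorem FilL.lie_3 (a b : FilL K) : ⁅a, b⁆ 3 = a 0 * b 2 - a 2 * b 0 := rfl
@[simp] theorem FilL.lie_4 (a b : FilL K) : ⁅a, b⁆ 4 = a 0 * b 3 - a 3 * b 0 := rfl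
@[simp] theorem FilC.lie_0 (a b : FilC K) : ⁅a, b⁆ 0 = 0 := rfl
@[simp] theorem FilC.lie_1 (a b : FilC K) : ⁅a, b⁆ 1 = 0 := rfl
@[simp] theorem FilC.lie_2 (a b : FilC K) : ⁅a, b⁆ 2 = a 0 * b 1 - a 1 * b 0 := rfl
@[simp] theorem FilC.lie_3 (a b : FilC K) : ⁅a, b⁆ 3 = a 0 * b 2 - a 2 * b 0 := rfl
@[simp] theorem FilC.lie_4 (a b : FilC K) : ⁅a, b⁆ 4 = a 0 * b 3 - a 3 * b 0 := rfl
@[simp] theorem FilC.lie_5 (a b : FilC K) : ⁅a, b⁆ 5 = a 0 * b 4 - a 4 * b 0 := rfl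
@[simp] theorem FilC.lie_6 (a b : FilC K) : ⁅a, b⁆ 6 = a 1 * b 2 - a 2 * b 1 := rfl
@[simp] theorem FilC.lie_7 (a b : FilC K) : ⁅a, b⁆ 7 = a 1 * b 4 - a 4 * b 1 - (a 2 * b 3 - a 3 * b 2) := rfl

instance : LieRing (FilL K) where
  add_lie a b c := by
    apply FilL.ext <;> simp <;> ring
  lie_add a b c := by
    apply FilL.ext <;> simp <;> ring
  lie_self a := by
    apply FilL.ext <;> simp <;> ring
  leibniz_lie a b c := by
    apply FilL.ext <;> simp <;> ring

instance : LieAlgebra K (FilL K) where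
  lie_smul t a b := by
    apply FilL.ext <;> simp <;> ring

instance : LieRing (FilC K) where
  add_lie a b c := by
    apply FilC.ext <;> simp <;> ring
  lie_add a b c := by
    apply FilC.ext <;> simp <;> ring
  lie_self a := by
    apply FilC.ext <;> simp <;> ring
  leibniz_lie a b c := by
    apply FilC.ext <;> simp <;> ring

instance : LieAlgebra K (FilC K) where
  lie_smul t a b := by
    apply FilC.ext <;> simp <;> ring

/-- Basis vectors of the model. -/
def FilL.e (i : Fin 5) : FilL K := (Pi.single i 1 : Fin 5 → K)

theorem FilL.e_apply (i j : Fin 5) : (FilL.e i : FilL K) j = if j = i then 1 else 0 := by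
  simp [FilL.e, Pi.single_apply]

/-- The projection of the cover onto the model. -/
def FilC.proj : FilC K →ₗ⁅K⁆ FilL K where
  toFun a := (![a 0, a 1, a 2, a 3, a 4] : Fin 5 → K)
  map_add' a b := by apply FilL.ext <;> rfl
  map_smul' a b := by apply FilL.ext <;> rfl
  map_lie' := by intro a b; apply FilL.ext <;> rfl

/-- The obvious set-theoretic section. -/
def FilL.sec (a : FilL K) : FilC K := (![a 0, a 1, a 2, a 3, a 4, 0, 0, 0] : Fin 8 → K)

@[simp] theorem FilL.sec_0 (a : FilL K) : FilL.sec a 0 = a 0 := rfl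
@[simp] theorem FilL.sec_1 (a : FilL K) : FilL.sec a 1 = a 1 := rfl
@[simp] theorem FilL.sec_2 (a : FilL K) : FilL.sec a 2 = a 2 := rfl
@[simp] theorem FilL.sec_3 (a : FilL K) : FilL.sec a 3 = a 3 := rfl
@[simp] theorem FilL.sec_4 (a : FilL K) : FilL.sec a 4 = a 4 := rfl
@[simp] theorem FilL.sec_5 (a : FilL K) : FilL.sec a 5 = 0 := rfl
@[simp] theorem FilL.sec_6 (a : FilL K) : FilL.sec a 6 = 0 := rfl
@[simp] theorem FilL.sec_7 (a : FilL K) : FilL.sec a 7 = 0 := rfl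
@[simp] theorem FilC.proj_0 (a : FilC K) : FilC.proj a 0 = a 0 := rfl
@[simp] theorem FilC.proj_1 (a : FilC K) : FilC.proj a 1 = a 1 := rfl
@[simp] theorem FilC.proj_2 (a : FilC K) : FilC.proj a 2 = a 2 := rfl
@[simp] theorem FilC.proj_3 (a : FilC K) : FilC.proj a 3 = a 3 := rfl
@[simp] theorem FilC.proj_4 (a : FilC K) : FilC.proj a 4 = a 4 := rfl

theorem FilC.proj_sec (a : FilL K) : FilC.proj (FilL.sec a) = a := by
  apply FilL.ext <;> rfl

/-- The bracket of the cover depends only on the projections. -/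
theorem FilC.lie_eq (a b : FilC K) :
    ⁅a, b⁆ = ⁅FilL.sec (FilC.proj a), FilL.sec (FilC.proj b)⁆ := by
  apply FilC.ext <;> rfl

theorem FilL.finrank : Module.finrank K (FilL K) = 5 := by
  have : Module.finrank K (Fin 5 → K) = 5 := by simp
  exact this

/-- Bilinear expansion in a Lie algebra satisfying the relations of the model. -/
theorem calcL {E : Type} [LieRing E] [LieAlgebra K E] (g : Fin 5 → E)
    (h01 : ⁅g 0, g 1⁆ = g 2) (h02 : ⁅g 0, g 2⁆ = g 3) (h03 : ⁅g 0, g 3⁆ = g 4)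
    (h04 : ⁅g 0, g 4⁆ = 0) (h12 : ⁅g 1, g 2⁆ = 0) (h13 : ⁅g 1, g 3⁆ = 0) (h14 : ⁅g 1, g 4⁆ = 0)
    (h23 : ⁅g 2, g 3⁆ = 0) (h24 : ⁅g 2, g 4⁆ = 0) (h34 : ⁅g 3, g 4⁆ = 0) (a b : FilL K) :
    ∑ i, ⁅a, b⁆ i • g i = ⁅∑ i, a i • g i, ∑ i, b i • g i⁆ := by
  have k (i j : Fin 5) : ⁅g j, g i⁆ = - ⁅g i, g j⁆ := (lie_skew _ _).symm
  simp only [Fin.sum_univ_five, lie_add, add_lie, lie_smul, smul_lie, lie_self, k 0 1, k 0 2, k 0 3,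
    k 0 4, k 1 2, k 1 3, k 1 4, k 2 3, k 2 4, k 3 4, h01, h02, h03, h04, h12, h13, h14, h23, h24,
    h34, FilL.lie_0, FilL.lie_1, FilL.lie_2, FilL.lie_3, FilL.lie_4]
  module

/-- Bilinear expansion in a central extension. -/
theorem calcC {E : Type} [LieRing E] [LieAlgebra K E] (g : Fin 5 → E)
    (h13 : ⁅g 1, g 3⁆ = 0)
    (h23 : ⁅g 2, g 3⁆ = - ⁅g 1, g 4⁆) (h24 : ⁅g 2, g 4⁆ = 0) (h34 : ⁅g 3, g 4⁆ = 0)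
    (a b : FilL K) :
    ⁅∑ i, a i • g i, ∑ i, b i • g i⁆ =
      ∑ i : Fin 6, ⁅FilL.sec a, FilL.sec b⁆ i.succ.succ •
        (![⁅g 0, g 1⁆, ⁅g 0, g 2⁆, ⁅g 0, g 3⁆, ⁅g 0, g 4⁆, ⁅g 1, g 2⁆, ⁅g 1, g 4⁆] : Fin 6 → E) i := by
  have k (i j : Fin 5) : ⁅g j, g i⁆ = - ⁅g i, g j⁆ := (lie_skew _ _).symm
  simp only [Fin.sum_univ_five, Fin.sum_univ_six, lie_add, add_lie, lie_smul, smul_lie, lie_self,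
    k 0 1, k 0 2, k 0 3,
    k 0 4, k 1 2, k 1 3, k 1 4, k 2 3, k 2 4, k 3 4, h13, h23, h24, h34]
  rw [show ⁅FilL.sec a, FilL.sec b⁆ (Fin.succ (Fin.succ (0 : Fin 6))) = _ from FilC.lie_2 _ _,
    show ⁅FilL.sec a, FilL.sec b⁆ (Fin.succ (Fin.succ (1 : Fin 6))) = _ from FilC.lie_3 _ _,
    show ⁅FilL.sec a, FilL.sec b⁆ (Fin.succ (Fin.succ (2 : Fin 6))) = _ from FilC.lie_4 _ _,
    show ⁅FilL.sec a, FilL.sec b⁆ (Fin.succ (Fin.succ (3 : Fin 6))) = _ from FilC.lie_5 _ _,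
    show ⁅FilL.sec a, FilL.sec b⁆ (Fin.succ (Fin.succ (4 : Fin 6))) = _ from FilC.lie_6 _ _,
    show ⁅FilL.sec a, FilL.sec b⁆ (Fin.succ (Fin.succ (5 : Fin 6))) = _ from FilC.lie_7 _ _]
  simp [-lie_skew]
  module

theorem FilL.sum_e (a : FilL K) : ∑ i, a i • (FilL.e i : FilL K) = a := by
  apply FilL.ext <;> simp [Fin.sum_univ_five, FilL.e_apply]

end Models

section Main
variable {K : Type} [Field K]

/-- The derived ideal of a free Lie algebra is spanned, modulo `[R,F]`, by six brackets. -/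
theorem span_mod {X : Type} (π : FreeLieAlgebra K X →ₗ⁅K⁆ FilL K) (f : Fin 5 → FreeLieAlgebra K X)
    (hf : ∀ i, π (f i) = FilL.e i) (y : FreeLieAlgebra K X)
    (hy : y ∈ LieModule.lowerCentralSeries K (FreeLieAlgebra K X) (FreeLieAlgebra K X) 1) :
    ∃ c : Fin 6 → K, y - ∑ i, c i • (![⁅f 0, f 1⁆, ⁅f 0, f 2⁆, ⁅f 0, f 3⁆, ⁅f 0, f 4⁆, ⁅f 1, f 2⁆,
      ⁅f 1, f 4⁆] : Fin 6 → FreeLieAlgebra K X) i ∈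
        (⁅π.ker, (⊤ : LieIdeal K (FreeLieAlgebra K X))⁆ : LieIdeal K (FreeLieAlgebra K X)) := by
  set J : LieIdeal K (FreeLieAlgebra K X) :=
    ⁅π.ker, (⊤ : LieIdeal K (FreeLieAlgebra K X))⁆ with hJ
  let q : FreeLieAlgebra K X →ₗ[K] (FreeLieAlgebra K X ⧸ J) := J.toSubmodule.mkQ
  have qlie : ∀ a b, q ⁅a, b⁆ = ⁅q a, q b⁆ := fun a b => rfl
  have q0 : ∀ a, q a = 0 ↔ a ∈ J := fun a => Submodule.Quotient.mk_eq_zero J.toSubmodule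
  have key : ∀ u v w, π u = π v → ⁅q u, q w⁆ = ⁅q v, q w⁆ := by
    intro u v w h
    rw [← sub_eq_zero, ← sub_lie, ← map_sub, ← qlie, q0]
    refine LieSubmodule.lie_mem_lie ?_ (LieSubmodule.mem_top _)
    rw [LieHom.mem_ker, map_sub, h, sub_self]
  have key' : ∀ u v w, π u = π v → ⁅q w, q u⁆ = ⁅q w, q v⁆ := by
    intro u v w h
    rw [← lie_skew, key u v w h, lie_skew]
  have jac : ∀ i j k : Fin 5, ⁅q (f i), q ⁅f j, f k⁆⁆ =
      ⁅q ⁅f i, f j⁆, q (f k)⁆ + ⁅q (f j), q ⁅f i, f k⁆⁆ := by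
    intro i j k
    rw [qlie, qlie, qlie]; exact leibniz_lie _ _ _
  have p01 : π ⁅f 0, f 1⁆ = π (f 2) := by
    simp only [LieHom.map_lie, hf]; apply FilL.ext <;> simp [FilL.e_apply]
  have p02 : π ⁅f 0, f 2⁆ = π (f 3) := by
    simp only [LieHom.map_lie, hf]; apply FilL.ext <;> simp [FilL.e_apply]
  have p03 : π ⁅f 0, f 3⁆ = π (f 4) := by
    simp only [LieHom.map_lie, hf]; apply FilL.ext <;> simp [FilL.e_apply]
  have p04 : π ⁅f 0, f 4⁆ = π 0 := by
    simp only [LieHom.map_lie, hf, map_zero]; apply FilL.ext <;> simp [FilL.e_apply]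
  have p12 : π ⁅f 1, f 2⁆ = π 0 := by
    simp only [LieHom.map_lie, hf, map_zero]; apply FilL.ext <;> simp [FilL.e_apply]
  have p13 : π ⁅f 1, f 3⁆ = π 0 := by
    simp only [LieHom.map_lie, hf, map_zero]; apply FilL.ext <;> simp [FilL.e_apply]
  have p14 : π ⁅f 1, f 4⁆ = π 0 := by
    simp only [LieHom.map_lie, hf, map_zero]; apply FilL.ext <;> simp [FilL.e_apply]
  have p23 : π ⁅f 2, f 3⁆ = π 0 := by
    simp only [LieHom.map_lie, hf, map_zero]; apply FilL.ext <;> simp [FilL.e_apply]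
  have p24 : π ⁅f 2, f 4⁆ = π 0 := by
    simp only [LieHom.map_lie, hf, map_zero]; apply FilL.ext <;> simp [FilL.e_apply]
  have h13 : ⁅q (f 1), q (f 3)⁆ = 0 := by
    have := jac 0 1 2
    rw [key' _ _ _ p12, key _ _ _ p01, key' _ _ _ p02] at this
    simpa using this.symm
  have h23 : ⁅q (f 2), q (f 3)⁆ = - ⁅q (f 1), q (f 4)⁆ := by
    have := jac 0 1 3
    rw [key' _ _ _ p13, key _ _ _ p01, key' _ _ _ p03] at this
    rw [map_zero, lie_zero] at this
    exact eq_neg_of_add_eq_zero_left this.symm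
  have h24 : ⁅q (f 2), q (f 4)⁆ = 0 := by
    have := jac 0 2 3
    rw [key' _ _ _ p23, key _ _ _ p02, key' _ _ _ p03] at this
    simpa using this.symm
  have h34 : ⁅q (f 3), q (f 4)⁆ = 0 := by
    have := jac 0 2 4
    rw [key' _ _ _ p24, key _ _ _ p02, key' _ _ _ p04] at this
    simpa using this.symm
  have hπs : ∀ x, π x = π (∑ i, π x i • f i) := by
    intro x
    rw [map_sum]
    simp only [map_smul, hf, FilL.sum_e]
  have main : q y ∈ Submodule.span K (Set.range (![⁅q (f 0), q (f 1)⁆, ⁅q (f 0), q (f 2)⁆,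
      ⁅q (f 0), q (f 3)⁆, ⁅q (f 0), q (f 4)⁆, ⁅q (f 1), q (f 2)⁆,
      ⁅q (f 1), q (f 4)⁆] : Fin 6 → FreeLieAlgebra K X ⧸ J)) := by
    rw [LieModule.lowerCentralSeries_succ, ← LieSubmodule.mem_toSubmodule,
      LieSubmodule.lieIdeal_oper_eq_linear_span'] at hy
    induction hy using Submodule.span_induction with
    | mem z hz =>
      obtain ⟨x, -, n, -, rfl⟩ := hz
      rw [qlie, key _ _ _ (hπs x), key' _ _ _ (hπs n)]
      simp only [map_sum, map_smul]
      rw [calcC (fun i => q (f i)) h13 h23 h24 h34]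
      refine Submodule.sum_mem _ fun i _ => Submodule.smul_mem _ _ (Submodule.subset_span ⟨i, rfl⟩)
    | zero => simp
    | add a b _ _ ha hb => rw [map_add]; exact Submodule.add_mem _ ha hb
    | smul t a _ ha => rw [map_smul]; exact Submodule.smul_mem _ _ ha
  obtain ⟨c, hc⟩ := (Submodule.mem_span_range_iff_exists_fun K).1 main
  refine ⟨c, ?_⟩
  rw [← q0, map_sub, ← hc, sub_eq_zero, map_sum]
  simp only [map_smul]
  refine Finset.sum_congr rfl fun i _ => ?_
  fin_cases i <;> rfl

theorem schur_FilL {X : Type} (π : FreeLieAlgebra K X →ₗ⁅K⁆ FilL K)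
    (hπ : Function.Surjective π) : lieSchurMultiplierDim K X π = 3 := by
  choose f hf using fun i => hπ (FilL.e i)
  let φ : FreeLieAlgebra K X →ₗ⁅K⁆ FilC K :=
    FreeLieAlgebra.lift K (fun x => FilL.sec (π (FreeLieAlgebra.of K x)))
  have hφ : FilC.proj.comp φ = π := by
    apply FreeLieAlgebra.hom_ext
    intro x
    simp only [LieHom.comp_apply, φ, FreeLieAlgebra.lift_of_apply, FilC.proj_sec]
  have hφ' : ∀ y, FilC.proj (φ y) = π y := fun y => by rw [← hφ]; rfl
  have hlie : ∀ a b, φ ⁅a, b⁆ = ⁅FilL.sec (π a), FilL.sec (π b)⁆ := by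
    intro a b
    rw [LieHom.map_lie, FilC.lie_eq, hφ', hφ']
  have hJ : ∀ y ∈ (⁅π.ker, (⊤ : LieIdeal K (FreeLieAlgebra K X))⁆ :
      LieIdeal K (FreeLieAlgebra K X)), φ y = 0 := by
    have : (⁅π.ker, (⊤ : LieIdeal K (FreeLieAlgebra K X))⁆ :
      LieIdeal K (FreeLieAlgebra K X)) ≤ φ.ker := by
      rw [LieSubmodule.lie_le_iff]
      intro x hx m _
      rw [LieHom.mem_ker] at hx ⊢
      rw [hlie, hx]
      apply FilC.ext <;> simp
    intro y hy
    exact LieHom.mem_ker.1 (this hy)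
  have hsum : ∀ c : Fin 6 → K, φ (∑ i, c i • (![⁅f 0, f 1⁆, ⁅f 0, f 2⁆, ⁅f 0, f 3⁆, ⁅f 0, f 4⁆,
      ⁅f 1, f 2⁆, ⁅f 1, f 4⁆] : Fin 6 → FreeLieAlgebra K X) i) =
      (![0, 0, c 0, c 1, c 2, c 3, c 4, c 5] : Fin 8 → K) := by
    intro c
    simp only [Fin.sum_univ_six, map_add, map_smul]
    have h (i j : Fin 5) : φ ⁅f i, f j⁆ = ⁅FilL.sec (FilL.e i : FilL K), FilL.sec (FilL.e j : FilL K)⁆ := by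
      rw [hlie, hf, hf]
    simp only [Matrix.cons_val, h]
    apply FilC.ext <;> simp [FilL.e_apply]
  unfold lieSchurMultiplierDim
  let M : Submodule K (FreeLieAlgebra K X) := ((π.ker ⊓ LieModule.lowerCentralSeries K (FreeLieAlgebra K X) (FreeLieAlgebra K X) 1 : LieIdeal K (FreeLieAlgebra K X)) :
    Submodule K (FreeLieAlgebra K X))
  let T0 : FilC K →ₗ[K] (Fin 3 → K) :=
    { toFun := fun a => ![a 5, a 6, a 7]
      map_add' := fun a b => by ext i; fin_cases i <;> rfl
      map_smul' := fun t a => by ext i; fin_cases i <;> rfl }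
  let T : M →ₗ[K] (Fin 3 → K) := T0 ∘ₗ (φ : FreeLieAlgebra K X →ₗ[K] FilC K) ∘ₗ M.subtype
  have hT : ∀ y : M, T y = ![φ y 5, φ y 6, φ y 7] := fun y => rfl
  have hker : LinearMap.ker T = Submodule.comap M.subtype
      ((⁅π.ker, (⊤ : LieIdeal K (FreeLieAlgebra K X))⁆ : LieIdeal K (FreeLieAlgebra K X)) : Submodule K (FreeLieAlgebra K X)) := by
    ext ⟨y, hy⟩
    rw [LinearMap.mem_ker, hT, Submodule.mem_comap]
    change _ ↔ y ∈ (⁅π.ker, (⊤ : LieIdeal K (FreeLieAlgebra K X))⁆ : LieIdeal K (FreeLieAlgebra K X))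
    constructor
    · intro h
      obtain ⟨hy1, hy2⟩ : y ∈ π.ker ∧ y ∈ LieModule.lowerCentralSeries K (FreeLieAlgebra K X) (FreeLieAlgebra K X) 1 :=
        (LieSubmodule.mem_inf _ _ _).1 hy
      obtain ⟨c, hc⟩ := span_mod π f hf y hy2
      have h1 := hJ _ hc
      rw [map_sub, sub_eq_zero, hsum] at h1
      rw [LieHom.mem_ker, ← hφ', h1] at hy1
      simp only [h1] at h
      have c0 : c 0 = 0 := congrFun hy1 2
      have c1 : c 1 = 0 := congrFun hy1 3
      have c2 : c 2 = 0 := congrFun hy1 4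
      have c3 : c 3 = 0 := congrFun h 0
      have c4 : c 4 = 0 := congrFun h 1
      have c5 : c 5 = 0 := congrFun h 2
      simpa [Fin.sum_univ_six, c0, c1, c2, c3, c4, c5] using hc
    · intro h
      simp only [hJ y h]
      ext i; fin_cases i <;> rfl
  have hsurj : Function.Surjective T := by
    intro v
    set c : Fin 6 → K := ![0, 0, 0, v 0, v 1, v 2] with hcdef
    have hc := hsum c
    refine ⟨⟨∑ i, c i • (![⁅f 0, f 1⁆, ⁅f 0, f 2⁆, ⁅f 0, f 3⁆, ⁅f 0, f 4⁆,
      ⁅f 1, f 2⁆, ⁅f 1, f 4⁆] : Fin 6 → FreeLieAlgebra K X) i, ?_⟩, ?_⟩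
    · refine (LieSubmodule.mem_inf _ _ _).2 ⟨?_, ?_⟩
      · rw [LieHom.mem_ker, ← hφ', hc]
        apply FilL.ext <;> rfl
      · refine sum_mem fun i _ => SMulMemClass.smul_mem _ ?_
        rw [LieModule.lowerCentralSeries_succ]
        fin_cases i <;> exact LieSubmodule.lie_mem_lie (LieSubmodule.mem_top _)
          (LieSubmodule.mem_top _)
    · rw [hT]
      simp only [hc]
      ext i; fin_cases i <;> rfl
  have e1 := (T.quotKerEquivOfSurjective hsurj).finrank_eq
  rw [hker] at e1
  rw [Module.finrank_fin_fun] at e1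
  exact e1

end Main

section Transfer
variable (K : Type) [Field K]

/-- The relators of `lieL57`. -/
def relL57 : Set (FreeLieAlgebra K (Fin 5)) :=
  let x : Fin 5 → FreeLieAlgebra K (Fin 5) := FreeLieAlgebra.of K
  {⁅x 0, x 1⁆ - x 2, ⁅x 0, x 2⁆ - x 3, ⁅x 0, x 3⁆ - x 4, ⁅x 0, x 4⁆,
     ⁅x 1, x 2⁆, ⁅x 1, x 3⁆, ⁅x 1, x 4⁆, ⁅x 2, x 3⁆, ⁅x 2, x 4⁆, ⁅x 3, x 4⁆}

theorem quot_L57 : ∃ q : FreeLieAlgebra K (Fin 5) →ₗ⁅K⁆ lieL57 K, Function.Surjective q ∧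
    ∀ y, q y = 0 ↔ y ∈ LieSubmodule.lieSpan K (FreeLieAlgebra K (Fin 5))
      (relL57 K) := by
  set I := LieSubmodule.lieSpan K (FreeLieAlgebra K (Fin 5))
      (relL57 K) with hI
  let q : FreeLieAlgebra K (Fin 5) →ₗ⁅K⁆ (FreeLieAlgebra K (Fin 5) ⧸ I) :=
    { I.toSubmodule.mkQ with map_lie' := fun {_ _} => rfl }
  have h : ∃ q : FreeLieAlgebra K (Fin 5) →ₗ⁅K⁆ (FreeLieAlgebra K (Fin 5) ⧸ I),
      Function.Surjective q ∧ ∀ y, q y = 0 ↔ y ∈ I :=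
    ⟨q, Submodule.mkQ_surjective I.toSubmodule,
      fun y => Submodule.Quotient.mk_eq_zero I.toSubmodule⟩
  exact h

theorem equiv_L57 : Nonempty (FilL K ≃ₗ⁅K⁆ lieL57 K) := by
  obtain ⟨q, hq, hI⟩ := quot_L57 K
  let ρ : FreeLieAlgebra K (Fin 5) →ₗ⁅K⁆ FilL K := FreeLieAlgebra.lift K FilL.e
  have hρ : ∀ i, ρ (FreeLieAlgebra.of K i) = FilL.e i := fun i => FreeLieAlgebra.lift_of_apply ..
  have hρI : ∀ y, q y = 0 → ρ y = 0 := by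
    intro y hy
    rw [hI] at hy
    refine LieHom.mem_ker.1 ((LieSubmodule.lieSpan_le.2 ?_ :
      LieSubmodule.lieSpan K _ _ ≤ ρ.ker) hy)
    rintro z (rfl | rfl | rfl | rfl | rfl | rfl | rfl | rfl | rfl | rfl) <;>
    · rw [SetLike.mem_coe, LieHom.mem_ker]
      simp only [map_sub, LieHom.map_lie, hρ]
      apply FilL.ext <;> simp [FilL.e_apply]
  have g : ∀ z ∈ (relL57 K),
      q z = 0 := fun z hz => (hI z).2 (LieSubmodule.subset_lieSpan hz)
  simp only [relL57, Set.mem_insert_iff, Set.mem_singleton_iff, forall_eq_or_imp, forall_eq, map_sub,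
    LieHom.map_lie, sub_eq_zero] at g
  obtain ⟨h01, h02, h03, h04, h12, h13, h14, h23, h24, h34⟩ := g
  let σ : FilL K →ₗ⁅K⁆ lieL57 K :=
    { toFun := fun a => ∑ i : Fin 5, a i • q (FreeLieAlgebra.of K i)
      map_add' := fun a b => by simp [add_smul, Finset.sum_add_distrib]
      map_smul' := fun t a => by simp [mul_smul, Finset.smul_sum]
      map_lie' := fun {a b} => calcL (fun i => q (FreeLieAlgebra.of K i))
        h01 h02 h03 h04 h12 h13 h14 h23 h24 h34 a b }
  have hσ : ∀ a, σ a = ∑ i : Fin 5, a i • q (FreeLieAlgebra.of K i) := fun a => rfl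
  have hσρ : σ.comp ρ = q := by
    apply FreeLieAlgebra.hom_ext
    intro x
    rw [LieHom.comp_apply, hρ, hσ]
    simp [FilL.e_apply]
  refine ⟨LieEquiv.ofBijective σ ⟨?_, ?_⟩⟩
  · rw [injective_iff_map_eq_zero]
    intro a ha
    have h1 : q (∑ i : Fin 5, a i • FreeLieAlgebra.of K i) = 0 := by
      rw [map_sum, ← ha, hσ]; simp only [map_smul]
    have h2 := hρI _ h1
    rw [map_sum] at h2
    simp only [map_smul, hρ] at h2
    rwa [FilL.sum_e] at h2
  · intro y
    obtain ⟨x, rfl⟩ := hq y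
    exact ⟨ρ x, by rw [← LieHom.comp_apply, hσρ]⟩

/-- The ideal of vectors in the model vanishing in coordinates `< k + 1` (for `1 ≤ k`). -/
def FilL.idl (k : ℕ) : LieIdeal K (FilL K) where
  carrier := {a | ∀ i : Fin 5, (i : ℕ) ≤ k → a i = 0}
  add_mem' := fun {a b} ha hb i hi => by simp [ha i hi, hb i hi]
  zero_mem' := fun i _ => rfl
  smul_mem' := fun t a ha i hi => by simp [ha i hi]
  lie_mem := fun {x a} ha i hi => by
    have := fun j => ha j
    fin_cases i
    · exact FilL.lie_0 _ _
    · exact FilL.lie_1 _ _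
    · simp at hi
      have h0 := ha 0 (by simp)
      have h1 := ha 1 (by simp; omega)
      change ⁅x, a⁆ 2 = 0
      simp [h0, h1]
    · simp at hi
      have h0 := ha 0 (by simp)
      have h1 := ha 2 (by simp; omega)
      change ⁅x, a⁆ 3 = 0
      simp [h0, h1]
    · simp at hi
      have h0 := ha 0 (by simp)
      have h1 := ha 3 (by simp; omega)
      change ⁅x, a⁆ 4 = 0
      simp [h0, h1]

theorem FilL.mem_idl (k : ℕ) (a : FilL K) :
    a ∈ FilL.idl K k ↔ ∀ i : Fin 5, (i : ℕ) ≤ k → a i = 0 := Iff.rfl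

theorem FilL.lcs_le (k : ℕ) :
    LieModule.lowerCentralSeries K (FilL K) (FilL K) (k + 1) ≤ FilL.idl K (k + 1) := by
  induction k with
  | zero =>
    rw [LieModule.lowerCentralSeries_succ, LieSubmodule.lie_le_iff]
    intro x _ m _ i hi
    fin_cases i <;> first | rfl | (simp at hi)
  | succ k ih =>
    rw [LieModule.lowerCentralSeries_succ, LieSubmodule.lie_le_iff]
    intro x _ m hm i hi
    have hm := ih hm
    rw [FilL.mem_idl] at hm
    have h0 := hm 0 (by simp)
    fin_cases i
    · rfl
    · rfl
    · have h1 := hm 1 (by simp)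
      change ⁅x, m⁆ 2 = 0
      simp [h0, h1]
    · simp at hi
      have h1 := hm 2 (by simp; omega)
      change ⁅x, m⁆ 3 = 0
      simp [h0, h1]
    · simp at hi
      have h1 := hm 3 (by simp; omega)
      change ⁅x, m⁆ 4 = 0
      simp [h0, h1]

theorem FilL.lcs_one :
    LieModule.lowerCentralSeries K (FilL K) (FilL K) 1 = FilL.idl K 1 := by
  refine le_antisymm (FilL.lcs_le K 0) ?_
  intro a ha
  rw [FilL.mem_idl] at ha
  have h0 := ha 0 (by simp)
  have h1 := ha 1 (by simp)
  obtain ⟨b, b0, b1, b2, b3⟩ : ∃ b : FilL K, b 0 = 0 ∧ b 1 = a 2 ∧ b 2 = a 3 ∧ b 3 = a 4 :=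
    ⟨(![0, a 2, a 3, a 4, 0] : Fin 5 → K), rfl, rfl, rfl, rfl⟩
  have : a = ⁅(FilL.e 0 : FilL K), b⁆ := by
    apply FilL.ext <;> simp [FilL.e_apply, h0, h1, b0, b1, b2, b3]
  rw [this, LieModule.lowerCentralSeries_succ]
  exact LieSubmodule.lie_mem_lie (LieSubmodule.mem_top _) (LieSubmodule.mem_top _)

theorem FilL.derived : lieDerivedDim K (FilL K) = 3 := by
  unfold lieDerivedDim
  rw [FilL.lcs_one]
  let f : (FilL.idl K 1 : Submodule K (FilL K)) ≃ₗ[K] (Fin 3 → K) :=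
    { toFun := fun a => ![a.1 2, a.1 3, a.1 4]
      map_add' := fun a b => by ext i; fin_cases i <;> rfl
      map_smul' := fun t a => by ext i; fin_cases i <;> rfl
      invFun := fun v => ⟨(![0, 0, v 0, v 1, v 2] : Fin 5 → K), by
        intro i hi
        fin_cases i <;> first | rfl | (simp at hi)⟩
      left_inv := fun a => by
        have h0 := a.2 0 (by simp)
        have h1 := a.2 1 (by simp)
        apply Subtype.ext
        apply FilL.ext
        · exact h0.symm
        · exact h1.symm
        · rfl
        · rfl
        · rfl
      right_inv := fun v => by ext i; fin_cases i <;> rfl }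
  exact f.finrank_eq.trans (by simp)

theorem FilL.nilp : lieNilpotencyClass K (FilL K) 4 := by
  constructor
  · rw [eq_bot_iff]
    intro a ha
    have h := FilL.lcs_le K 3 ha
    rw [FilL.mem_idl] at h
    rw [LieSubmodule.mem_bot]
    exact funext fun i => h i (by omega)
  · intro k hk h
    have h3 : (FilL.e 4 : FilL K) ∈ LieModule.lowerCentralSeries K (FilL K) (FilL K) 3 := by
      have : (FilL.e 4 : FilL K) = ⁅(FilL.e 0 : FilL K), ⁅(FilL.e 0 : FilL K),
          ⁅(FilL.e 0 : FilL K), (FilL.e 1 : FilL K)⁆⁆⁆ := by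
        apply FilL.ext <;> simp [FilL.e_apply]
      rw [this]
      simp only [LieModule.lowerCentralSeries_succ]
      exact LieSubmodule.lie_mem_lie (LieSubmodule.mem_top _)
        (LieSubmodule.lie_mem_lie (LieSubmodule.mem_top _)
          (LieSubmodule.lie_mem_lie (LieSubmodule.mem_top _) (LieSubmodule.mem_top _)))
    have h4 := LieModule.antitone_lowerCentralSeries K (FilL K) (FilL K) (show k ≤ 3 by omega) h3
    rw [h, LieSubmodule.mem_bot] at h4
    have := congrFun h4 4
    rw [FilL.e_apply] at this
    simp at this

variable {K} in
theorem lcs_equiv {L L' : Type} [LieRing L] [LieAlgebra K L] [LieRing L'] [LieAlgebra K L']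
    (e : L ≃ₗ⁅K⁆ L') (k : ℕ) :
    (LieModule.lowerCentralSeries K L' L' k).toSubmodule =
      (LieModule.lowerCentralSeries K L L k).toSubmodule.map (e.toLinearEquiv : L →ₗ[K] L') := by
  induction k with
  | zero =>
    simp
  | succ k ih =>
    rw [LieModule.lowerCentralSeries_succ, LieModule.lowerCentralSeries_succ,
      LieSubmodule.lieIdeal_oper_eq_linear_span', LieSubmodule.lieIdeal_oper_eq_linear_span',
      Submodule.map_span]
    congr 1
    ext z
    constructor
    · rintro ⟨x, -, n, hn, rfl⟩
      rw [← LieSubmodule.mem_toSubmodule, ih] at hn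
      obtain ⟨m, hm, rfl⟩ := hn
      refine ⟨⁅e.symm x, m⁆, ⟨e.symm x, LieSubmodule.mem_top _, m, hm, rfl⟩, ?_⟩
      change e ⁅e.symm x, m⁆ = ⁅x, e m⁆
      rw [LieEquiv.map_lie, LieEquiv.apply_symm_apply]
    · rintro ⟨_, ⟨x, -, n, hn, rfl⟩, rfl⟩
      refine ⟨e x, LieSubmodule.mem_top _, e n, ?_, ?_⟩
      · rw [← LieSubmodule.mem_toSubmodule, ih]
        exact ⟨n, hn, rfl⟩
      · exact (LieEquiv.map_lie e x n).symm

end Transfer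

/-- `L_{5,7}` is nilpotent of maximal class `4` with `dim L² = 3`, its
Schur multiplier has dimension `3`, and with `n = 5`, `m = 3`, `c = 4` this equals
`(1/2)(n−m−1)(n+m) − Σ_{i=2}^{min(n−m,c)} (n−m−i) − 1`. -/
theorem schur_multiplier_L57 (K : Type) [Field K] :
    Module.finrank K (lieL57 K) = 5 ∧ lieDerivedDim K (lieL57 K) = 3 ∧
    lieNilpotencyClass K (lieL57 K) 4 ∧
    (∀ (X : Type) (π : FreeLieAlgebra K X →ₗ⁅K⁆ lieL57 K), Function.Surjective π →
      lieSchurMultiplierDim K X π = 3) ∧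
    (3 : ℤ) = raiBound 5 3 4 - 1 := by
  obtain ⟨e⟩ := equiv_L57 K
  have hbot : ∀ k, LieModule.lowerCentralSeries K (lieL57 K) (lieL57 K) k = ⊥ ↔
      LieModule.lowerCentralSeries K (FilL K) (FilL K) k = ⊥ := by
    intro k
    rw [← LieSubmodule.toSubmodule_eq_bot, ← LieSubmodule.toSubmodule_eq_bot, lcs_equiv e k]
    exact Submodule.map_eq_bot_iff
  refine ⟨?_, ?_, ?_, ?_, ?_⟩
  · rw [← e.toLinearEquiv.finrank_eq]
    exact FilL.finrank
  · rw [← FilL.derived K]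
    unfold lieDerivedDim
    change Module.finrank K
        ↥(LieModule.lowerCentralSeries K (lieL57 K) (lieL57 K) 1).toSubmodule =
      Module.finrank K ↥(LieModule.lowerCentralSeries K (FilL K) (FilL K) 1).toSubmodule
    rw [lcs_equiv e 1]
    exact LinearEquiv.finrank_map_eq e.toLinearEquiv _
  · obtain ⟨h1, h2⟩ := FilL.nilp K
    exact ⟨(hbot 4).2 h1, fun k hk h => h2 k hk ((hbot k).1 h)⟩
  · intro X π hπ
    have h := schur_FilL (e.symm.toLieHom.comp π) (e.symm.surjective.comp hπ)
    have hk : (e.symm.toLieHom.comp π).ker = π.ker := by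
      ext x
      rw [LieHom.mem_ker, LieHom.mem_ker, LieHom.comp_apply]
      exact map_eq_zero_iff e.symm e.symm.injective
    unfold lieSchurMultiplierDim at h ⊢
    rw [hk] at h
    exact h
  · decide
end
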